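/- Minimal Lorentzian surfaces with flat normal bundle and nowhere-null second fundamental form lie in a Lorentzian hyperplane (Proposition 3.2, Case 2): in the setting of a minimal Lorentzian surface x(s,t) = α(s) + β(t) in null coordinates with I₁ × I₂ connected, suppose that at every point (s,t): η₁(s,t) ∧ η₂(s,t) = 0, B(η₁(s,t), η₁(s,t)) ≠ 0, and B(η₂(s,t), η₂(s,t)) ≠ 0. Then there exist a constant vector e₄ ∈ ℝ⁴ with B(e₄,e₄) > 0 and a constant c ∈ ℝ such that B(x(s,t), e₄) = c for all (s,t); that is, the surface is contained in a Lorentzian (i.e. space-like-normal) hyperplane of 𝔼⁴₁. -/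

import Mathlib

noncomputable section

/-- The Minkowski bilinear form on `ℝ⁴ = Fin 4 → ℝ`:
`B(v,w) = -v₀w₀ + v₁w₁ + v₂w₂ + v₃w₃`. -/
def B4 (v w : Fin 4 → ℝ) : ℝ :=
  -(v 0 * w 0) + v 1 * w 1 + v 2 * w 2 + v 3 * w 3

/-- The wedge product `v ∧ w`, modelled concretely as the antisymmetric array
`(i,j) ↦ vᵢwⱼ - vⱼwᵢ` (a faithful model of the second exterior power `Λ²(ℝ⁴)`). -/
def wedge (v w : Fin 4 → ℝ) : Fin 4 → Fin 4 → ℝ :=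
  fun i j => v i * w j - v j * w i

/-- Partial derivative of a two-parameter map with respect to the first variable. -/
def pds {E : Type*} [NormedAddCommGroup E] [NormedSpace ℝ E]
    (x : ℝ → ℝ → E) (s t : ℝ) : E :=
  deriv (fun u => x u t) s

/-- Partial derivative of a two-parameter map with respect to the second variable. -/
def pdt {E : Type*} [NormedAddCommGroup E] [NormedSpace ℝ E]
    (x : ℝ → ℝ → E) (s t : ℝ) : E :=
  deriv (fun u => x s u) t

/-- `m²(s,t) = -B(α'(s), β'(t))`, the conformal factor of the induced metric
`-m²(ds⊗dt + dt⊗ds)` of the minimal Lorentzian surface `x(s,t) = α(s) + β(t)`. -/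
def msq (α β : ℝ → Fin 4 → ℝ) (s t : ℝ) : ℝ :=
  -B4 (deriv α s) (deriv β t)

/-- `η₁ = h(∂s,∂s)`: the component of `x_{ss} = α''` orthogonal to the tangent
plane `span{α'(s), β'(t)}`. -/
def eta1 (α β : ℝ → Fin 4 → ℝ) (s t : ℝ) : Fin 4 → ℝ :=
  deriv (deriv α) s
    - (B4 (deriv (deriv α) s) (deriv β t) / B4 (deriv α s) (deriv β t)) • deriv α s

/-- `η₂ = h(∂t,∂t)`: the component of `x_{tt} = β''` orthogonal to the tangent
plane `span{α'(s), β'(t)}`. -/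
def eta2 (α β : ℝ → Fin 4 → ℝ) (s t : ℝ) : Fin 4 → ℝ :=
  deriv (deriv β) t
    - (B4 (deriv (deriv β) t) (deriv α s) / B4 (deriv α s) (deriv β t)) • deriv β t

/-- The Gauss map `ν = (1/m²)·(α'(s) ∧ β'(t))`, valued in (a model of) `Λ²(ℝ⁴)`. -/
def gaussMap (α β : ℝ → Fin 4 → ℝ) (s t : ℝ) : Fin 4 → Fin 4 → ℝ :=
  (1 / msq α β s t) • wedge (deriv α s) (deriv β t)

/-- The Laplace–Beltrami operator of the induced metric `-m²(ds⊗dt + dt⊗ds)`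
(with the sign convention of the paper) acting on `Λ²(ℝ⁴)`-valued maps:
`Δξ = (2/m²)·∂²ξ/∂s∂t`. -/
def lap (α β : ℝ → Fin 4 → ℝ) (ξ : ℝ → ℝ → (Fin 4 → Fin 4 → ℝ)) (s t : ℝ) :
    Fin 4 → Fin 4 → ℝ :=
  (2 / msq α β s t) • pds (pdt ξ) s t

/-- Minkowski cross product of three vectors. -/
def cr4 (a p b : Fin 4 → ℝ) : Fin 4 → ℝ :=
  ![-(a 1 * (p 2 * b 3 - p 3 * b 2) - a 2 * (p 1 * b 3 - p 3 * b 1) + a 3 * (p 1 * b 2 - p 2 * b 1)),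
    -(a 0 * (p 2 * b 3 - p 3 * b 2) - a 2 * (p 0 * b 3 - p 3 * b 0) + a 3 * (p 0 * b 2 - p 2 * b 0)),
    (a 0 * (p 1 * b 3 - p 3 * b 1) - a 1 * (p 0 * b 3 - p 3 * b 0) + a 3 * (p 0 * b 1 - p 1 * b 0)),
    -(a 0 * (p 1 * b 2 - p 2 * b 1) - a 1 * (p 0 * b 2 - p 2 * b 0) + a 2 * (p 0 * b 1 - p 1 * b 0))]

lemma cr4_orth_third (a p b : Fin 4 → ℝ) : B4 (cr4 a p b) b = 0 := by
  simp [B4, cr4]; ring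

lemma cr4_orth_first (a p b : Fin 4 → ℝ) : B4 (cr4 a p b) a = 0 := by
  simp [B4, cr4]; ring

set_option maxHeartbeats 2000000 in
lemma cr4_gram (a p b : Fin 4 → ℝ) (ha : B4 a a = 0) (hb : B4 b b = 0) :
    B4 (cr4 a p b) (cr4 a p b) =
      B4 a b ^ 2 * B4 p p - 2 * B4 a b * B4 p b * B4 a p := by
  have : B4 (cr4 a p b) (cr4 a p b) =
      B4 a b ^ 2 * B4 p p - 2 * B4 a b * B4 p b * B4 a p
       - B4 a a * (B4 p p * B4 b b - B4 p b ^ 2) + B4 a p ^ 2 * B4 b b := by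
    simp [B4, cr4]; ring
  rw [this, ha, hb]; ring

lemma B4_comm (v w : Fin 4 → ℝ) : B4 v w = B4 w v := by simp [B4]; ring

lemma B4_spacelike (a b e : Fin 4 → ℝ) (ha : B4 a a = 0) (hb : B4 b b = 0)
    (hab : B4 a b < 0) (hea : B4 e a = 0) (heb : B4 e b = 0) : 0 ≤ B4 e e := by
  obtain ⟨u, hu, heu⟩ : ∃ u : Fin 4 → ℝ, B4 u u < 0 ∧ B4 e u = 0 := by
    refine ⟨a + b, ?_, ?_⟩
    · have : B4 (a + b) (a + b) = B4 a a + B4 b b + 2 * B4 a b := by simp [B4]; ring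
      rw [this, ha, hb]; linarith
    · have : B4 e (a + b) = B4 e a + B4 e b := by simp [B4]; ring
      rw [this, hea, heb]; simp
  simp only [B4] at *
  by_contra hc
  push Not at hc
  have hcs : (e 1 * u 1 + e 2 * u 2 + e 3 * u 3) ^ 2 ≤
      (e 1 ^ 2 + e 2 ^ 2 + e 3 ^ 2) * (u 1 ^ 2 + u 2 ^ 2 + u 3 ^ 2) := by
    nlinarith [sq_nonneg (e 1 * u 2 - e 2 * u 1), sq_nonneg (e 1 * u 3 - e 3 * u 1),
      sq_nonneg (e 2 * u 3 - e 3 * u 2)]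
  have h0 : e 1 * u 1 + e 2 * u 2 + e 3 * u 3 = e 0 * u 0 := by linarith
  rw [h0] at hcs
  have hE : 0 ≤ e 1 ^ 2 + e 2 ^ 2 + e 3 ^ 2 := by positivity
  have hU : 0 ≤ u 1 ^ 2 + u 2 ^ 2 + u 3 ^ 2 := by positivity
  have h3 : e 1 ^ 2 + e 2 ^ 2 + e 3 ^ 2 < e 0 ^ 2 := by linarith
  have h4 : u 1 ^ 2 + u 2 ^ 2 + u 3 ^ 2 < u 0 ^ 2 := by linarith
  have := mul_lt_mul'' h3 h4 hE hU
  linarith [mul_pow (e 0) (u 0) 2]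

lemma wedge_prop (x y : Fin 4 → ℝ) (h : wedge x y = 0) (hx : B4 x x ≠ 0) :
    ∃ k : ℝ, y = k • x := by
  have hw : ∀ i j, x i * y j = x j * y i := by
    intro i j
    have := congrFun (congrFun h i) j
    simp [wedge] at this
    linarith
  have : ∃ i, x i ≠ 0 := by
    by_contra hc
    push Not at hc
    exact hx (by simp [B4, hc])
  obtain ⟨i, hi⟩ := this
  refine ⟨y i / x i, ?_⟩
  ext j
  have := hw i j
  simp
  field_simp
  linarith

lemma ratio_const (I : Set ℝ) (hI : IsOpen I) (hI' : I.OrdConnected)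
    (f g f' g' : ℝ → ℝ) (hf : ∀ t ∈ I, HasDerivAt f (f' t) t)
    (hg : ∀ t ∈ I, HasDerivAt g (g' t) t) (hg0 : ∀ t ∈ I, g t ≠ 0)
    (h : ∀ t ∈ I, f' t * g t = f t * g' t) (t₀ t : ℝ) (h₀ : t₀ ∈ I) (ht : t ∈ I) :
    f t * g t₀ = f t₀ * g t := by
  have hd : ∀ t ∈ I, HasDerivAt (fun t => f t / g t) 0 t := by
    intro t ht
    have := (hf t ht).fun_div (hg t ht) (hg0 t ht)
    rwa [h t ht, sub_self, zero_div] at this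
  have := hI.is_const_of_deriv_eq_zero hI'.isPreconnected
    (fun t ht => (hd t ht).differentiableAt.differentiableWithinAt)
    (fun t ht => (hd t ht).deriv) ht h₀
  have h1 := hg0 t ht
  have h2 := hg0 t₀ h₀
  rw [div_eq_div_iff h1 h2] at this
  exact this

lemma B4_hasDeriv (a : Fin 4 → ℝ) (b : ℝ → Fin 4 → ℝ) (b' : Fin 4 → ℝ) (t : ℝ)
    (h : HasDerivAt b b' t) : HasDerivAt (fun t => B4 (b t) a) (B4 b' a) t := by
  have h := hasDerivAt_pi.1 h
  exact ((((h 0).mul_const _).fun_neg.fun_add ((h 1).mul_const _)).fun_add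
    ((h 2).mul_const _)).fun_add ((h 3).mul_const _) |>.congr_deriv (by simp [B4])

lemma det_hasDeriv (a p x : Fin 4 → ℝ) (b : ℝ → Fin 4 → ℝ) (b' : Fin 4 → ℝ) (t : ℝ)
    (h : HasDerivAt b b' t) :
    HasDerivAt (fun t => B4 (cr4 a p (b t)) x) (B4 (cr4 a p b') x) t := by
  have e : ∀ v, B4 (cr4 a p v) x = B4 v (- cr4 a p x) := by
    intro v; simp [B4, cr4]; ring
  simp only [e]
  exact B4_hasDeriv _ _ _ _ h

/-- If `b'` stays in `span {a, p, b}` suitably, the hyperplane `span {a, p, b}` is constant. -/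
lemma orth_const (I : Set ℝ) (hI : IsOpen I) (hI' : I.OrdConnected)
    (a p : Fin 4 → ℝ) (b b' : ℝ → Fin 4 → ℝ) (hb : ∀ t ∈ I, HasDerivAt b (b' t) t)
    (h0 : ∀ t ∈ I, B4 (b t) a ≠ 0)
    (h : ∀ t ∈ I, ∃ k l : ℝ, b' t = (B4 (b' t) a / B4 (b t) a) • b t + k • (p - l • a))
    (t₀ t : ℝ) (h₀ : t₀ ∈ I) (ht : t ∈ I) : B4 (cr4 a p (b t₀)) (b t) = 0 := by
  have := ratio_const I hI hI' (fun τ => B4 (cr4 a p (b τ)) (b t)) (fun τ => B4 (b τ) a)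
    (fun τ => B4 (cr4 a p (b' τ)) (b t)) (fun τ => B4 (b' τ) a)
    (fun τ hτ => det_hasDeriv _ _ _ _ _ _ (hb τ hτ)) (fun τ hτ => B4_hasDeriv _ _ _ _ (hb τ hτ))
    h0 ?_ t₀ t h₀ ht
  · simp only [cr4_orth_third, zero_mul] at this
    exact (mul_eq_zero.1 this.symm).resolve_right (h0 t ht)
  · intro τ hτ
    obtain ⟨k, l, hk⟩ := h τ hτ
    have hn := h0 τ hτ
    have : ∀ m, B4 (cr4 a p (m • b τ + k • (p - l • a))) (b t) = m * B4 (cr4 a p (b τ)) (b t) := by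
      intro m; simp [B4, cr4]; ring
    have h2 : B4 (cr4 a p (b' τ)) (b t) = B4 (b' τ) a / B4 (b τ) a * B4 (cr4 a p (b τ)) (b t) := by
      rw [← this, ← hk]
    show B4 (cr4 a p (b' τ)) (b t) * _ = _
    rw [h2]
    field_simp

lemma B4_const (I : Set ℝ) (hI : IsOpen I) (hI' : I.OrdConnected) (e : Fin 4 → ℝ)
    (α : ℝ → Fin 4 → ℝ) (h : ∀ s ∈ I, HasDerivAt α (deriv α s) s)
    (h0 : ∀ s ∈ I, B4 (deriv α s) e = 0) (s₀ s : ℝ) (h₀ : s₀ ∈ I) (hs : s ∈ I) :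
    B4 (α s) e = B4 (α s₀) e := by
  have hd : ∀ s ∈ I, HasDerivAt (fun s => B4 (α s) e) 0 s := by
    intro s hs
    have := B4_hasDeriv e _ _ _ (h s hs)
    rwa [h0 s hs] at this
  exact hI.is_const_of_deriv_eq_zero hI'.isPreconnected
    (fun t ht => (hd t ht).differentiableAt.differentiableWithinAt)
    (fun t ht => (hd t ht).deriv) hs h₀

lemma smooth_derivs (I : Set ℝ) (hI : IsOpen I) (α : ℝ → Fin 4 → ℝ)
    (hα : ContDiffOn ℝ (⊤ : ℕ∞) α I) (s : ℝ) (hs : s ∈ I) :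
    HasDerivAt α (deriv α s) s ∧ HasDerivAt (deriv α) (deriv (deriv α) s) s := by
  have h1 : ContDiffOn ℝ 1 (deriv α) I :=
    hα.deriv_of_isOpen hI (show ((1 + 1 : ℕ∞) : WithTop ℕ∞) ≤ ((⊤ : ℕ∞) : WithTop ℕ∞) from WithTop.coe_le_coe.2 le_top)
  exact ⟨((hα.differentiableOn (by simp)).differentiableAt (hI.mem_nhds hs)).hasDerivAt,
    ((h1.differentiableOn (by simp)).differentiableAt (hI.mem_nhds hs)).hasDerivAt⟩

/-- Proposition 3.2, Case 2: a minimal Lorentzian surface in null coordinates with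
flat normal bundle (`η₁ ∧ η₂ ≡ 0`) and nowhere-null second fundamental form
(`B(η₁,η₁) ≠ 0`, `B(η₂,η₂) ≠ 0`) lies in a Lorentzian (space-like-normal)
hyperplane of `𝔼⁴₁`. -/
theorem lies_in_lorentzian_hyperplane
    (I₁ I₂ : Set ℝ) (hI₁ : IsOpen I₁) (hI₂ : IsOpen I₂)
    (hI₁' : I₁.OrdConnected) (hI₂' : I₂.OrdConnected)
    (α β : ℝ → Fin 4 → ℝ)
    (hα : ContDiffOn ℝ (⊤ : ℕ∞) α I₁) (hβ : ContDiffOn ℝ (⊤ : ℕ∞) β I₂)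
    (hαnull : ∀ s ∈ I₁, B4 (deriv α s) (deriv α s) = 0)
    (hβnull : ∀ t ∈ I₂, B4 (deriv β t) (deriv β t) = 0)
    (hneg : ∀ s ∈ I₁, ∀ t ∈ I₂, B4 (deriv α s) (deriv β t) < 0)
    (hwedge : ∀ s ∈ I₁, ∀ t ∈ I₂, wedge (eta1 α β s t) (eta2 α β s t) = 0)
    (h1 : ∀ s ∈ I₁, ∀ t ∈ I₂, B4 (eta1 α β s t) (eta1 α β s t) ≠ 0)
    (h2 : ∀ s ∈ I₁, ∀ t ∈ I₂, B4 (eta2 α β s t) (eta2 α β s t) ≠ 0) :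
    ∃ (e₄ : Fin 4 → ℝ) (c : ℝ), 0 < B4 e₄ e₄ ∧
      ∀ s ∈ I₁, ∀ t ∈ I₂, B4 (α s + β t) e₄ = c := by
  rcases I₁.eq_empty_or_nonempty with rfl | ⟨s₀, hs₀⟩
  · exact ⟨![0, 1, 0, 0], 0, by simp [B4], by simp⟩
  rcases I₂.eq_empty_or_nonempty with rfl | ⟨t₀, ht₀⟩
  · exact ⟨![0, 1, 0, 0], 0, by simp [B4], by simp⟩
  have Dα := smooth_derivs I₁ hI₁ α hα
  have Dβ := smooth_derivs I₂ hI₂ β hβ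
  have k1 : ∀ s ∈ I₁, ∀ t ∈ I₂, ∃ k : ℝ, eta2 α β s t = k • eta1 α β s t :=
    fun s hs t ht => wedge_prop _ _ (hwedge s hs t ht) (h1 s hs t ht)
  have k2 : ∀ s ∈ I₁, ∀ t ∈ I₂, ∃ k : ℝ, eta1 α β s t = k • eta2 α β s t := by
    intro s hs t ht
    refine wedge_prop _ _ ?_ (h2 s hs t ht)
    ext i j
    have := congrFun (congrFun (hwedge s hs t ht) i) j
    simp [wedge] at this ⊢
    linarith
  have eb : ∀ t ∈ I₂, B4 (cr4 (deriv α s₀) (deriv (deriv α) s₀) (deriv β t₀)) (deriv β t) = 0 := by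
    intro t ht
    refine orth_const I₂ hI₂ hI₂' _ _ (deriv β) (deriv (deriv β)) (fun t ht => (Dβ t ht).2)
      (fun t ht => by rw [B4_comm]; exact (hneg s₀ hs₀ t ht).ne) ?_ t₀ t ht₀ ht
    intro t ht
    obtain ⟨k, hk⟩ := k1 s₀ hs₀ t ht
    rw [eta1, eta2, sub_eq_iff_eq_add, B4_comm (deriv α s₀) (deriv β t), add_comm] at hk
    exact ⟨k, _, hk⟩
  have ea' : ∀ s ∈ I₁, B4 (cr4 (deriv β t₀) (deriv (deriv β) t₀) (deriv α s₀)) (deriv α s) = 0 := by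
    intro s hs
    refine orth_const I₁ hI₁ hI₁' _ _ (deriv α) (deriv (deriv α)) (fun t ht => (Dα t ht).2)
      (fun s hs => (hneg s hs t₀ ht₀).ne) ?_ s₀ s hs₀ hs
    intro s hs
    obtain ⟨k, hk⟩ := k2 s hs t₀ ht₀
    rw [eta1, eta2, sub_eq_iff_eq_add, add_comm] at hk
    exact ⟨k, _, hk⟩
  have ea : ∀ s ∈ I₁, B4 (cr4 (deriv α s₀) (deriv (deriv α) s₀) (deriv β t₀)) (deriv α s) = 0 := by
    intro s hs
    obtain ⟨k, hk⟩ := k2 s₀ hs₀ t₀ ht₀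
    rw [eta1, eta2, sub_eq_iff_eq_add] at hk
    have hk' : ∀ (a b q x : Fin 4 → ℝ) (m l : ℝ),
        B4 (cr4 a (k • (q - m • b) + l • a) b) x = -k * B4 (cr4 b q a) x := by
      intro a b q x m l
      simp [B4, cr4]; ring
    rw [hk, hk', ea' s hs, mul_zero]
  set e := cr4 (deriv α s₀) (deriv (deriv α) s₀) (deriv β t₀) with he
  have hab := hneg s₀ hs₀ t₀ ht₀
  refine ⟨e, B4 (α s₀) e + B4 (β t₀) e, ?_, ?_⟩
  · refine lt_of_le_of_ne (B4_spacelike _ _ _ (hαnull s₀ hs₀) (hβnull t₀ ht₀) hab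
      (ea s₀ hs₀) (eb t₀ ht₀)) (Ne.symm ?_)
    rw [he, cr4_gram _ _ _ (hαnull s₀ hs₀) (hβnull t₀ ht₀)]
    have hη := h1 s₀ hs₀ t₀ ht₀
    have hexp : ∀ (a p : Fin 4 → ℝ) (l : ℝ),
        B4 (p - l • a) (p - l • a) = B4 p p - 2 * l * B4 a p + l ^ 2 * B4 a a := by
      intro a p l; simp [B4]; ring
    rw [eta1, hexp, hαnull s₀ hs₀] at hη
    intro hc
    apply hη
    have hn := hab.ne
    rw [mul_zero, add_zero]
    apply mul_left_cancel₀ (pow_ne_zero 2 hn)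
    rw [mul_zero, ← hc]
    field_simp
  · intro s hs t ht
    have hadd : B4 (α s + β t) e = B4 (α s) e + B4 (β t) e := by simp [B4]; ring
    rw [hadd, B4_const I₁ hI₁ hI₁' e α (fun s hs => (Dα s hs).1)
      (fun s hs => by rw [B4_comm]; exact ea s hs) s₀ s hs₀ hs,
      B4_const I₂ hI₂ hI₂' e β (fun s hs => (Dβ s hs).1)
      (fun s hs => by rw [B4_comm]; exact eb s hs) t₀ t ht₀ ht]
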